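/- arXiv:2512.16116 — 3 statements merged into one kernel-verified Lean document; each statement's English description precedes it below -/
import Mathlib

section
/- Let B : H → G be a relative Rota-Baxter operator on a brace (G,·_G,∘_G) with respect to a semi-trivial action Φ : G → Aut(H). Define h ∘_B k := h ∘_H Φ(B(h))(k). Then (H, ·_H, ∘_B) is a brace (the descendent brace), and B : (H, ·_H, ∘_B) → (G, ·_G, ∘_G) is a homomorphism of braces. -/
/-!
The operation `h ⊳ k = Φ (B h) k` makes `H` a post-brace: weighted associativity is the identity
`B (h ∘_B k) = B h ∘_G B k` pushed through the multiplicative map `Φ`. The product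
`h ∘_B k = h ∘_H (h ⊳ k)` is then the sub-adjacent operation of this post-brace. It is associative,
the `∘_H`-unit is a right unit because every `h ⊳ ·` fixes it, and surjectivity of `h ⊳ ·` gives
right inverses, so it is a group operation.
-/

structure IsGroup {G : Type*} (op : G → G → G) (e : G) (inv : G → G) : Prop where
  assoc : ∀ a b c, op (op a b) c = op a (op b c)
  one_op : ∀ a, op e a = a
  op_one : ∀ a, op a e = a
  inv_op : ∀ a, op (inv a) a = e
  op_inv : ∀ a, op a (inv a) = e

/-- A brace: an abelian group `(G, mul)` and a group `(G, circ)` with the compatibility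
`a ∘ (b · c) = (a ∘ b) · a⁻¹ · (a ∘ c)`. -/
structure IsBrace {G : Type*} (mul : G → G → G) (e : G) (inv : G → G)
    (circ : G → G → G) (ce : G) (cinv : G → G) : Prop where
  mul_group : IsGroup mul e inv
  mul_comm : ∀ a b, mul a b = mul b a
  circ_group : IsGroup circ ce cinv
  compat : ∀ a b c, circ a (mul b c) = mul (mul (circ a b) (inv a)) (circ a c)

/-- A homomorphism of braces preserves both operations. -/
def IsBraceHom {G H : Type*} (mulG circG : G → G → G) (mulH circH : H → H → H)
    (f : G → H) : Prop :=
  (∀ a b, f (mulG a b) = mulH (f a) (f b)) ∧ (∀ a b, f (circG a b) = circH (f a) (f b))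

/-- A brace automorphism: a bijective self-homomorphism. -/
def IsBraceAut {H : Type*} (mulH circH : H → H → H) (f : H → H) : Prop :=
  Function.Bijective f ∧ IsBraceHom mulH circH mulH circH f

/-- A semi-trivial action of the brace `G` on the brace `H`: each `Φ a` is a brace
automorphism of `H` and `Φ (a ∘ b) = Φ a ∘ Φ b`. -/
def IsSemiTrivialAction {G H : Type*} (circG : G → G → G)
    (mulH circH : H → H → H) (Φ : G → H → H) : Prop :=
  (∀ a, IsBraceAut mulH circH (Φ a)) ∧ (∀ a b h, Φ (circG a b) h = Φ a (Φ b h))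

/-- A relative Rota-Baxter operator on the brace `G` with respect to the semi-trivial
action `Φ` of `G` on `H`. -/
def IsRelRBO {G H : Type*} (mulG circG : G → G → G) (mulH circH : H → H → H)
    (Φ : G → H → H) (B : H → G) : Prop :=
  (∀ h k, mulG (B h) (B k) = B (mulH h k)) ∧
  (∀ h k, circG (B h) (B k) = B (circH h (Φ (B h) k)))

/-- An enhanced relative Rota-Baxter operator. -/
def IsEnhancedRelRBO {G H : Type*} (mulG circG : G → G → G) (mulH circH : H → H → H)
    (Φ : G → H → H) (B : H → G) : Prop :=
  (∀ h k, mulG (B h) (B k) = B (mulH h k)) ∧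
  (∀ (a : G) (h k : H), circG (mulG (B h) a) (B k)
      = mulG (B (circH h (Φ (mulG (B h) a) k))) a)

/-- A post-group: a group `(G, circ)` with an operation `tri` such that each left
multiplication `tri a` is an automorphism of `(G, circ)` and the weighted associativity
`(a ∘ (a ⊳ b)) ⊳ c = a ⊳ (b ⊳ c)` holds. -/
structure IsPostGroup {G : Type*} (circ : G → G → G) (ce : G) (cinv : G → G)
    (tri : G → G → G) : Prop where
  circ_group : IsGroup circ ce cinv
  tri_bij : ∀ a, Function.Bijective (tri a)
  tri_circ : ∀ a b c, tri a (circ b c) = circ (tri a b) (tri a c)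
  weighted : ∀ a b c, tri (circ a (tri a b)) c = tri a (tri b c)

/-- A post-brace: a brace `(G, mul, circ)` with `tri` making `(G, circ, tri)` a post-group
and `a ⊳ (b · c) = (a ⊳ b) · (a ⊳ c)`. -/
structure IsPostBrace {G : Type*} (mul : G → G → G) (e : G) (inv : G → G)
    (circ : G → G → G) (ce : G) (cinv : G → G) (tri : G → G → G) : Prop where
  brace : IsBrace mul e inv circ ce cinv
  post : IsPostGroup circ ce cinv tri
  tri_mul : ∀ a b c, tri a (mul b c) = mul (tri a b) (tri a c)

/-- A two-sided brace. -/
def IsTwoSidedBrace {G : Type*} (mul : G → G → G) (e : G) (inv : G → G)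
    (circ : G → G → G) (ce : G) (cinv : G → G) : Prop :=
  IsBrace mul e inv circ ce cinv ∧
  ∀ a b c, circ (mul a b) c = mul (mul (circ a c) (inv c)) (circ b c)

/-- The adjoint action of the `circ`-group: `Ad∘_a(b) = a ∘ b ∘ ā`. -/
def adC {G : Type*} (circ : G → G → G) (cinv : G → G) (a b : G) : G :=
  circ (circ a b) (cinv a)

/-- A Rota-Baxter operator on a two-sided brace (w.r.t. the adjoint semi-trivial action). -/
def IsRBTwoSided {G : Type*} (mul circ : G → G → G) (cinv : G → G) (B : G → G) : Prop :=
  (∀ a b, mul (B a) (B b) = B (mul a b)) ∧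
  (∀ a b, circ (B a) (B b) = B (circ a (adC circ cinv (B a) b)))

/-- An enhanced Rota-Baxter operator on a two-sided brace. -/
def IsEnhancedRBTwoSided {G : Type*} (mul circ : G → G → G) (cinv : G → G)
    (B : G → G) : Prop :=
  IsRBTwoSided mul circ cinv B ∧
  ∀ a b x, circ (mul (B a) x) (B b)
      = mul (B (circ a (adC circ cinv (mul (B a) x) b))) x

/-- `R × Id` on `X × X × X`. -/
def YB12 {X : Type*} (R : X × X → X × X) : X × X × X → X × X × X :=
  fun p => ((R (p.1, p.2.1)).1, (R (p.1, p.2.1)).2, p.2.2)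

/-- `Id × R` on `X × X × X`. -/
def YB23 {X : Type*} (R : X × X → X × X) : X × X × X → X × X × X :=
  fun p => (p.1, R p.2)

/-- A set-theoretical solution of the Yang-Baxter equation. -/
def IsYBSolution {X : Type*} (R : X × X → X × X) : Prop :=
  Function.Bijective R ∧
  YB12 R ∘ YB23 R ∘ YB12 R = YB23 R ∘ YB12 R ∘ YB23 R

/-- Non-degeneracy of a solution `R (a, b) = (φ_a b, ψ_b a)`. -/
def IsNonDegenerate {X : Type*} (R : X × X → X × X) : Prop :=
  (∀ a, Function.Bijective fun b => (R (a, b)).1) ∧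
  (∀ b, Function.Bijective fun a => (R (a, b)).2)

/-- Involutivity of a solution: `R ∘ R = Id`. -/
def IsInvolutiveSol {X : Type*} (R : X × X → X × X) : Prop :=
  ∀ p, R (R p) = p

/-- A matched pair of groups `(G, H, σ)` with `σ (a, h) = (r a h, l a h)`. -/
def IsMatchedPairOfGroups {G H : Type*} (opG : G → G → G) (eG : G)
    (opH : H → H → H) (eH : H) (r : G → H → H) (l : G → H → G) : Prop :=
  (∀ h, r eG h = h) ∧
  (∀ a b h, r a (r b h) = r (opG a b) h) ∧
  (∀ a b h, l (opG a b) h = opG (l a (r b h)) (l b h)) ∧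
  (∀ a, l a eH = a) ∧
  (∀ a h k, l (l a h) k = l a (opH h k)) ∧
  (∀ a h k, r a (opH h k) = opH (r a h) (r (l a h) k))

/-- A left ideal of the brace with multiplication `op` (with unit `u`) and second
operation `cop`: a subgroup of the `op`-group such that `p⁻¹ op (p cop x) ∈ S`
(expressed via the unique solution `r` of `op p r = cop p x`). -/
def IsLeftIdealOf {P : Type*} (op : P → P → P) (u : P) (cop : P → P → P)
    (S : Set P) : Prop :=
  u ∈ S ∧ (∀ p ∈ S, ∀ q ∈ S, op p q ∈ S) ∧
  (∀ p ∈ S, ∃ q ∈ S, op p q = u ∧ op q p = u) ∧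
  (∀ p : P, ∀ x ∈ S, ∀ r, op p r = cop p x → r ∈ S)

/-- `I` is an ideal of the sub-brace `S` of the ambient brace: a subgroup of `(S, mul)`,
normal in `(S, mul)` and in `(S, circ)`, and a left ideal of `S`. -/
def IsIdealOfSub {G : Type*} (mul : G → G → G) (e : G) (inv : G → G)
    (circ : G → G → G) (cinv : G → G) (S I : Set G) : Prop :=
  I ⊆ S ∧ e ∈ I ∧
  (∀ x ∈ I, ∀ y ∈ I, mul x y ∈ I) ∧ (∀ x ∈ I, inv x ∈ I) ∧
  (∀ s ∈ S, ∀ x ∈ I, mul (mul s x) (inv s) ∈ I) ∧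
  (∀ s ∈ S, ∀ x ∈ I, circ (circ s x) (cinv s) ∈ I) ∧
  (∀ s ∈ S, ∀ x ∈ I, mul (inv s) (circ s x) ∈ I)

namespace IsGroup

theorem of_right_axioms {G : Type*} {op : G → G → G} {e : G} {inv : G → G}
    (assoc : ∀ a b c, op (op a b) c = op a (op b c)) (op_one : ∀ a, op a e = a)
    (op_inv : ∀ a, op a (inv a) = e) : IsGroup op e inv := by
  let _ : Mul G := ⟨op⟩
  let _ : One G := ⟨e⟩
  let _ : Inv G := ⟨inv⟩
  let _ : Group G := Group.ofRightAxioms assoc op_one op_inv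
  exact ⟨mul_assoc, one_mul, mul_one, inv_mul_cancel, mul_inv_cancel⟩

/-- The Mathlib group carried by `IsGroup op e inv`, giving access to the library's lemmas. -/
abbrev toGroup {G : Type*} {op : G → G → G} {e : G} {inv : G → G} (h : IsGroup op e inv) :
    Group G where
  mul := op
  one := e
  inv := inv
  mul_assoc := h.assoc
  one_mul := h.one_op
  mul_one := h.op_one
  inv_mul_cancel := h.inv_op

theorem map_one {G H : Type*} {opG : G → G → G} {eG : G} {invG : G → G}
    {opH : H → H → H} {eH : H} {invH : H → H} (hG : IsGroup opG eG invG)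
    (hH : IsGroup opH eH invH) {f : G → H} (hf : ∀ a b, f (opG a b) = opH (f a) (f b)) :
    f eG = eH :=
  let _ := hG.toGroup
  let _ := hH.toGroup
  (MonoidHom.mk' f hf).map_one

end IsGroup

/-- The sub-adjacent operation `a ∘ (a ⊳ b)` of a post-group. For `h ⊳ k = Φ (B h) k` it is the
descendent operation `∘_B` of a relative Rota-Baxter operator `B`. -/
def subAdjacent {G : Type*} (circ tri : G → G → G) (a b : G) : G :=
  circ a (tri a b)

namespace IsPostGroup

variable {G : Type*} {circ : G → G → G} {ce : G} {cinv : G → G} {tri : G → G → G}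

theorem tri_one (h : IsPostGroup circ ce cinv tri) (a : G) : tri a ce = ce :=
  h.circ_group.map_one h.circ_group (h.tri_circ a)

theorem subAdjacent_assoc (h : IsPostGroup circ ce cinv tri) (a b c : G) :
    subAdjacent circ tri (subAdjacent circ tri a b) c =
      subAdjacent circ tri a (subAdjacent circ tri b c) :=
  calc circ (circ a (tri a b)) (tri (circ a (tri a b)) c)
    _ = circ (circ a (tri a b)) (tri a (tri b c)) := by rw [h.weighted]
    _ = circ a (circ (tri a b) (tri a (tri b c))) := h.circ_group.assoc ..
    _ = circ a (tri a (circ b (tri b c))) := by rw [h.tri_circ]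

theorem subAdjacent_one (h : IsPostGroup circ ce cinv tri) (a : G) :
    subAdjacent circ tri a ce = a := by
  rw [subAdjacent, h.tri_one, h.circ_group.op_one]

theorem exists_subAdjacent_eq_one (h : IsPostGroup circ ce cinv tri) (a : G) :
    ∃ b, subAdjacent circ tri a b = ce := by
  obtain ⟨b, hb⟩ := (h.tri_bij a).surjective (cinv a)
  exact ⟨b, by rw [subAdjacent, hb, h.circ_group.op_inv]⟩

theorem exists_isGroup_subAdjacent (h : IsPostGroup circ ce cinv tri) :
    ∃ inv : G → G, IsGroup (subAdjacent circ tri) ce inv := by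
  choose inv h_inv using h.exists_subAdjacent_eq_one
  exact ⟨inv, .of_right_axioms h.subAdjacent_assoc h.subAdjacent_one h_inv⟩

end IsPostGroup

namespace IsPostBrace

variable {G : Type*} {mul : G → G → G} {e : G} {inv : G → G} {circ : G → G → G} {ce : G}
  {cinv : G → G} {tri : G → G → G}

theorem subAdjacent_mul (h : IsPostBrace mul e inv circ ce cinv tri) (a b c : G) :
    subAdjacent circ tri a (mul b c) =
      mul (mul (subAdjacent circ tri a b) (inv a)) (subAdjacent circ tri a c) := by
  simp only [subAdjacent, h.tri_mul, h.brace.compat]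

theorem exists_isBrace_subAdjacent (h : IsPostBrace mul e inv circ ce cinv tri) :
    ∃ cinv' : G → G, IsBrace mul e inv (subAdjacent circ tri) ce cinv' := by
  obtain ⟨cinv', h_group⟩ := h.post.exists_isGroup_subAdjacent
  exact ⟨cinv', h.brace.mul_group, h.brace.mul_comm, h_group, h.subAdjacent_mul⟩

end IsPostBrace

namespace IsRelRBO

variable {G H : Type*} {mulG circG : G → G → G} {mulH circH : H → H → H} {Φ : G → H → H}
  {B : H → G}

theorem isPostBrace {eH : H} {invH : H → H} {ceH : H} {cinvH : H → H}
    (hB : IsRelRBO mulG circG mulH circH Φ B) (hΦ : IsSemiTrivialAction circG mulH circH Φ)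
    (hH : IsBrace mulH eH invH circH ceH cinvH) :
    IsPostBrace mulH eH invH circH ceH cinvH fun h => Φ (B h) where
  brace := hH
  post :=
    { circ_group := hH.circ_group
      tri_bij := fun h => (hΦ.1 (B h)).1
      tri_circ := fun h => (hΦ.1 (B h)).2.2
      weighted := fun h k l => by rw [← hB.2, hΦ.2] }
  tri_mul := fun h => (hΦ.1 (B h)).2.1

theorem isBraceHom (hB : IsRelRBO mulG circG mulH circH Φ B) :
    IsBraceHom mulH (subAdjacent circH fun h => Φ (B h)) mulG circG B :=
  ⟨fun h k => (hB.1 h k).symm, fun h k => (hB.2 h k).symm⟩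

end IsRelRBO

theorem statement3_general {G H : Type*} (mulG circG : G → G → G)
    (mulH : H → H → H) (eH : H) (invH : H → H)
    (circH : H → H → H) (ceH : H) (cinvH : H → H)
    (hH : IsBrace mulH eH invH circH ceH cinvH)
    (Φ : G → H → H) (hΦ : IsSemiTrivialAction circG mulH circH Φ)
    (B : H → G) (hB : IsRelRBO mulG circG mulH circH Φ B) :
    (∃ cinvB : H → H,
      IsBrace mulH eH invH (fun h k => circH h (Φ (B h) k)) ceH cinvB) ∧
    IsBraceHom mulH (fun h k => circH h (Φ (B h) k)) mulG circG B :=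
  ⟨(hB.isPostBrace hΦ hH).exists_isBrace_subAdjacent, hB.isBraceHom⟩

/-- A relative Rota-Baxter operator `B` induces the descendent brace
`(H, ·_H, ∘_B)` with `h ∘_B k = h ∘_H Φ(B h)(k)`, and `B` is a brace homomorphism from
the descendent brace to `G`. -/
theorem statement3 {G H : Type*}
    (mulG : G → G → G) (eG : G) (invG : G → G)
    (circG : G → G → G) (ceG : G) (cinvG : G → G)
    (mulH : H → H → H) (eH : H) (invH : H → H)
    (circH : H → H → H) (ceH : H) (cinvH : H → H)
    (hG : IsBrace mulG eG invG circG ceG cinvG)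
    (hH : IsBrace mulH eH invH circH ceH cinvH)
    (Φ : G → H → H) (hΦ : IsSemiTrivialAction circG mulH circH Φ)
    (B : H → G) (hB : IsRelRBO mulG circG mulH circH Φ B) :
    (∃ (u : H) (cinvB : H → H),
      IsBrace mulH eH invH (fun h k => circH h (Φ (B h) k)) u cinvB) ∧
    IsBraceHom mulH (fun h k => circH h (Φ (B h) k)) mulG circG B := by
  exact (statement3_general mulG circG mulH eH invH circH ceH cinvH hH Φ hΦ B hB).imp_left
    (Exists.intro ceH)
end

section
/- Let (G,·,∘) be a brace. Then the map R_G : G × G → G × G defined by R_G(a,b) = (a⁻¹ · (a ∘ b), (a⁻¹ · (a ∘ b))‾ ∘ a ∘ b), where x⁻¹ denotes the inverse of x in (G,·) and x̄ denotes the inverse of x in (G,∘), is a non-degenerate involutive set-theoretical solution of the Yang-Baxter equation on the set G. -/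
section Triples

variable {G : Type*}

lemma mul_mul_YB12 [Mul G] {R : G × G → G × G} (hR : ∀ p, (R p).1 * (R p).2 = p.1 * p.2)
    (t : G × G × G) :
    (YB12 R t).1 * (YB12 R t).2.1 * (YB12 R t).2.2 = t.1 * t.2.1 * t.2.2 :=
  congrArg (· * t.2.2) (hR (t.1, t.2.1))

lemma mul_mul_YB23 [Semigroup G] {R : G × G → G × G} (hR : ∀ p, (R p).1 * (R p).2 = p.1 * p.2)
    (t : G × G × G) :
    (YB23 R t).1 * (YB23 R t).2.1 * (YB23 R t).2.2 = t.1 * t.2.1 * t.2.2 := by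
  simp only [mul_assoc]
  exact congrArg (t.1 * ·) (hR t.2)

lemma triple_ext_of_mul_mul_eq [Mul G] [IsCancelMul G] {s t : G × G × G} (h₁ : s.1 = t.1)
    (h₃ : s.2.2 = t.2.2) (hmul : s.1 * s.2.1 * s.2.2 = t.1 * t.2.1 * t.2.2) : s = t := by
  rw [h₁, h₃] at hmul
  exact Prod.ext h₁ (Prod.ext (mul_left_cancel (mul_right_cancel hmul)) h₃)

end Triples

section Braiding

open MulOpposite

variable {G : Type*} [Group G]

/-- The map `(a, b) ↦ (λ_a b, ρ_b a)` given by a left action `λ` and a right action `ρ` of a group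
on its own underlying set; the right action is encoded as a homomorphism from `Gᵐᵒᵖ`. -/
def braiding (lam : G →* Equiv.Perm G) (rho : Gᵐᵒᵖ →* Equiv.Perm G) (p : G × G) : G × G :=
  (lam p.1 p.2, rho (op p.2) p.1)

lemma isNonDegenerate_braiding (lam : G →* Equiv.Perm G) (rho : Gᵐᵒᵖ →* Equiv.Perm G) :
    IsNonDegenerate (braiding lam rho) :=
  ⟨fun a => (lam a).bijective, fun b => (rho (op b)).bijective⟩

theorem yangBaxter_braiding {lam : G →* Equiv.Perm G} {rho : Gᵐᵒᵖ →* Equiv.Perm G}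
    (h : ∀ a b, lam a b * rho (op b) a = a * b) :
    YB12 (braiding lam rho) ∘ YB23 (braiding lam rho) ∘ YB12 (braiding lam rho) =
      YB23 (braiding lam rho) ∘ YB12 (braiding lam rho) ∘ YB23 (braiding lam rho) := by
  have hmul (p : G × G) : (braiding lam rho p).1 * (braiding lam rho p).2 = p.1 * p.2 :=
    h p.1 p.2
  funext ⟨a, b, c⟩
  apply triple_ext_of_mul_mul_eq
  · change lam (lam a b) (lam (rho (op b) a) c) = lam a (lam b c)
    simp only [← Equiv.Perm.mul_apply, ← map_mul, h]
  · change rho (op c) (rho (op b) a) = rho (op (rho (op c) b)) (rho (op (lam b c)) a)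
    simp only [← Equiv.Perm.mul_apply, ← map_mul, ← op_mul, h]
  · simp only [Function.comp_apply, mul_mul_YB12 hmul, mul_mul_YB23 hmul]

end Braiding

/-- A skew brace, written `(G, +, *)` in place of `(G, ·, ∘)` so that both group structures can be
type class instances. A brace is a skew brace whose additive group is commutative. -/
class IsSkewBrace (G : Type*) [AddGroup G] [Group G] : Prop where
  mul_add_eq : ∀ a b c : G, a * (b + c) = a * b - a + a * c

namespace IsSkewBrace

open MulOpposite

section SkewBrace

variable {G : Type*} [AddGroup G] [Group G] [IsSkewBrace G]

lemma one_eq_zero : (1 : G) = 0 := by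
  simpa using mul_add_eq (1 : G) 0 0

lemma neg_one_add_one_mul (a : G) : -1 + 1 * a = a := by
  rw [one_mul, one_eq_zero, neg_zero, zero_add]

lemma neg_add_mul_add (a b c : G) : -a + a * (b + c) = (-a + a * b) + (-a + a * c) := by
  simp only [mul_add_eq, sub_eq_add_neg, add_assoc]

lemma neg_add_mul_neg_add_mul (a b c : G) : -a + a * (-b + b * c) = -(a * b) + a * b * c := by
  have h : (-a + a * b) + (-a + a * (-b + b * c)) = -a + a * b * c := by
    rw [← neg_add_mul_add, add_neg_cancel_left, mul_assoc]
  rw [eq_neg_add_of_add_eq h, neg_add_rev, neg_neg, add_assoc, add_neg_cancel_left]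

variable (G) in
/-- The left action `λ_a b = -a + a * b` of the multiplicative group of a skew brace on its
underlying set. -/
def lam : G →* Equiv.Perm G :=
  MonoidHom.toHomPerm
    { toFun := fun a b => -a + a * b
      map_one' := funext neg_one_add_one_mul
      map_mul' := fun a b => funext fun c => (neg_add_mul_neg_add_mul a b c).symm }

lemma lam_apply (a b : G) : lam G a b = -a + a * b := rfl

lemma lam_add (a b c : G) : lam G a (b + c) = lam G a b + lam G a c :=
  neg_add_mul_add a b c

lemma add_lam (a b : G) : a + lam G a b = a * b :=
  add_neg_cancel_left a (a * b)

lemma lam_lam (a b c : G) : lam G a (lam G b c) = lam G (a * b) c := by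
  rw [map_mul, Equiv.Perm.mul_apply]

lemma lam_mul (a b c : G) :
    lam G a (b * c) = lam G a b * lam G ((lam G a b)⁻¹ * a * b) c :=
  calc lam G a (b * c) = lam G a b + lam G a (lam G b c) := by rw [← add_lam b c, lam_add]
    _ = lam G a b + lam G (lam G a b) (lam G ((lam G a b)⁻¹ * a * b) c) := by
      rw [lam_lam, lam_lam, mul_assoc _ a b, mul_inv_cancel_left]
    _ = lam G a b * lam G ((lam G a b)⁻¹ * a * b) c := add_lam _ _

lemma lam_one (a : G) : lam G a 1 = 1 := by
  rw [lam_apply, mul_one, neg_add_cancel, one_eq_zero]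

lemma inv_lam_one_mul (a : G) : (lam G a 1)⁻¹ * a * 1 = a := by
  rw [lam_one, inv_one, one_mul, mul_one]

lemma inv_lam_mul_mul (a b c : G) :
    (lam G a (b * c))⁻¹ * a * (b * c) =
      (lam G ((lam G a b)⁻¹ * a * b) c)⁻¹ * ((lam G a b)⁻¹ * a * b) * c := by
  rw [lam_mul]
  group

variable (G) in
/-- The right action `ρ_b a = (λ_a b)⁻¹ * a * b` of the multiplicative group of a skew brace on its
underlying set. -/
def rho : Gᵐᵒᵖ →* Equiv.Perm G :=
  MonoidHom.toHomPerm
    { toFun := fun b a => (lam G a b.unop)⁻¹ * a * b.unop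
      map_one' := funext inv_lam_one_mul
      map_mul' := fun c b => funext fun a => inv_lam_mul_mul a b.unop c.unop }

lemma rho_op_apply (a b : G) : rho G (op b) a = (lam G a b)⁻¹ * a * b := rfl

lemma lam_mul_rho (a b : G) : lam G a b * rho G (op b) a = a * b := by
  rw [rho_op_apply, mul_assoc, mul_inv_cancel_left]

end SkewBrace

section Brace

variable {G : Type*} [AddCommGroup G] [Group G] [IsSkewBrace G]

lemma lam_lam_rho (a b : G) : lam G (lam G a b) (rho G (op b) a) = a := by
  rw [lam_apply (lam G a b), lam_mul_rho, ← add_lam, add_comm a, neg_add_cancel_left]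

lemma rho_lam_rho (a b : G) : rho G (op (rho G (op b) a)) (lam G a b) = b := by
  have h := lam_mul_rho (lam G a b) (rho G (op b) a)
  rw [lam_lam_rho, lam_mul_rho] at h
  exact mul_left_cancel h

lemma isInvolutiveSol_braiding : IsInvolutiveSol (braiding (lam G) (rho G)) :=
  fun p => Prod.ext (lam_lam_rho p.1 p.2) (rho_lam_rho p.1 p.2)

end Brace

end IsSkewBrace

section Bundling

variable {G : Type*} {op : G → G → G} {e : G} {inv : G → G}

/-- The multiplicative group with the given operations. -/
abbrev IsGroup.toGroup_s9 (h : IsGroup op e inv) : Group G :=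
  letI : Mul G := ⟨op⟩
  letI : One G := ⟨e⟩
  letI : Inv G := ⟨inv⟩
  Group.ofLeftAxioms h.assoc h.one_op h.inv_op

/-- The additive commutative group with the given operations. -/
abbrev IsGroup.toAddCommGroup (h : IsGroup op e inv) (hcomm : ∀ a b, op a b = op b a) :
    AddCommGroup G :=
  letI : Add G := ⟨op⟩
  letI : Zero G := ⟨e⟩
  letI : Neg G := ⟨inv⟩
  { AddGroup.ofLeftAxioms h.assoc h.one_op h.inv_op with add_comm := hcomm }

end Bundling

/-- For a brace `(G, ·, ∘)`, the map
`R_G(a, b) = (a⁻¹ · (a ∘ b), (a⁻¹ · (a ∘ b))‾ ∘ a ∘ b)` is a non-degenerate involutive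
set-theoretical solution of the Yang-Baxter equation on `G`. -/
theorem statement9 {G : Type*} (mul : G → G → G) (e : G) (inv : G → G)
    (circ : G → G → G) (ce : G) (cinv : G → G)
    (hG : IsBrace mul e inv circ ce cinv)
    (R : G × G → G × G)
    (hR : ∀ a b, R (a, b) = (mul (inv a) (circ a b),
      circ (circ (cinv (mul (inv a) (circ a b))) a) b)) :
    IsYBSolution R ∧ IsNonDegenerate R ∧ IsInvolutiveSol R := by
  let _ : AddCommGroup G := hG.mul_group.toAddCommGroup hG.mul_comm
  let _ : Group G := hG.circ_group.toGroup_s9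
  have : IsSkewBrace G := ⟨hG.compat⟩
  obtain rfl : R = braiding (IsSkewBrace.lam G) (IsSkewBrace.rho G) := funext fun p => hR p.1 p.2
  have hinv := IsSkewBrace.isInvolutiveSol_braiding (G := G)
  exact ⟨⟨Function.Involutive.bijective hinv, yangBaxter_braiding IsSkewBrace.lam_mul_rho⟩,
    isNonDegenerate_braiding _ _, hinv⟩
end

section
/- Let B : H → G be an enhanced relative Rota-Baxter operator on a brace (G,·_G,∘_G) with respect to a semi-trivial action Φ : G → Aut(H). Define a ⇀ h = h, a ↽ h = a, a ⇁ h = Φ(a)(h), a ↼ h = a for a ∈ G, h ∈ H, and set σ(a,h) = (a ⇀ h, a ↽ h), θ(a,h) = (a ⇁ h, a ↼ h). Then (G,H,σ,θ) is a matched pair of braces: (G,H,σ) is a matched pair of the groups (G,·_G) and (H,·_H), (G,H,θ) is a matched pair of the groups (G,∘_G) and (H,∘_H), and the double operations (h,a) ·⋈ (k,b) = (h ·_H (a ⇀ k), (a ↽ k) ·_G b) and (h,a) ∘⋈ (k,b) = (h ∘_H (a ⇁ k), (a ↼ k) ∘_G b) make H × G into a brace with unit (e_H, e_G). -/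
theorem IsGroup.eq_one_of_op_self {G : Type*} {op : G → G → G} {e : G} {inv : G → G}
    (hG : IsGroup op e inv) {a : G} (ha : op a a = a) : a = e :=
  calc
    a = op (op (inv a) a) a := by rw [hG.inv_op, hG.one_op]
    _ = op (inv a) a := by rw [hG.assoc, ha]
    _ = e := hG.inv_op a

theorem IsBrace.circ_one_eq_one {G : Type*} {mul : G → G → G} {e : G} {inv : G → G}
    {circ : G → G → G} {ce : G} {cinv : G → G} (hG : IsBrace mul e inv circ ce cinv) :
    ce = e := by
  have inv_circ_one : inv ce = e := by
    simpa only [hG.circ_group.one_op, hG.mul_group.one_op, hG.mul_group.op_one]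
      using (hG.compat ce e e).symm
  calc
    ce = mul ce (inv ce) := by rw [inv_circ_one, hG.mul_group.op_one]
    _ = e := hG.mul_group.op_inv ce

/-- The operation `(h, a) ⋈ (k, b) = (h · (a ⇀ k), (a ↽ k) · b)` on `H × G` attached to
`σ (a, h) = (a ⇀ h, a ↽ h) = (r a h, l a h)`. -/
def bicrossedOp {G H : Type*} (opG : G → G → G) (opH : H → H → H)
    (r : G → H → H) (l : G → H → G) (p q : H × G) : H × G :=
  (opH p.1 (r p.2 q.1), opG (l p.2 q.1) q.2)

/-- The inverse `(a⁻¹ ⇀ h⁻¹, a⁻¹ ↽ h⁻¹)` of `(h, a)` for `bicrossedOp`: since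
`(h, a) = (h, e) ⋈ (e, a)`, it is `(e, a⁻¹) ⋈ (h⁻¹, e)`. -/
def bicrossedInv {G H : Type*} (invG : G → G) (invH : H → H)
    (r : G → H → H) (l : G → H → G) (p : H × G) : H × G :=
  (r (invG p.2) (invH p.1), l (invG p.2) (invH p.1))

namespace IsMatchedPairOfGroups

variable {G H : Type*} {opG : G → G → G} {eG : G} {invG : G → G}
  {opH : H → H → H} {eH : H} {invH : H → H} {r : G → H → H} {l : G → H → G}

theorem of_action (one_act : ∀ h, r eG h = h) (act_op : ∀ a b h, r (opG a b) h = r a (r b h))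
    (map_op : ∀ a h k, r a (opH h k) = opH (r a h) (r a k)) :
    IsMatchedPairOfGroups opG eG opH eH r (fun a _ => a) :=
  ⟨one_act, fun a b h => (act_op a b h).symm, fun _ _ _ => rfl, fun _ => rfl,
    fun _ _ _ => rfl, map_op⟩

theorem of_trivial_actions (opG : G → G → G) (eG : G) (opH : H → H → H) (eH : H) :
    IsMatchedPairOfGroups opG eG opH eH (fun _ h => h) (fun a _ => a) :=
  of_action (fun _ => rfl) (fun _ _ _ => rfl) (fun _ _ _ => rfl)

theorem r_one (hσ : IsMatchedPairOfGroups opG eG opH eH r l) (hH : IsGroup opH eH invH)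
    (a : G) : r a eH = eH := by
  obtain ⟨-, -, -, l_one, -, r_op⟩ := hσ
  apply hH.eq_one_of_op_self
  calc
    opH (r a eH) (r a eH) = r a (opH eH eH) := by rw [r_op, l_one]
    _ = r a eH := by rw [hH.one_op]

theorem one_l (hσ : IsMatchedPairOfGroups opG eG opH eH r l) (hG : IsGroup opG eG invG)
    (h : H) : l eG h = eG := by
  obtain ⟨one_r, -, op_l, -, -, -⟩ := hσ
  apply hG.eq_one_of_op_self
  calc
    opG (l eG h) (l eG h) = l (opG eG eG) h := by rw [op_l, one_r]
    _ = l eG h := by rw [hG.one_op]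

theorem isGroup_bicrossedOp (hσ : IsMatchedPairOfGroups opG eG opH eH r l)
    (hG : IsGroup opG eG invG) (hH : IsGroup opH eH invH) :
    IsGroup (bicrossedOp opG opH r l) (eH, eG) (bicrossedInv invG invH r l) := by
  have r_one := hσ.r_one hH
  have one_l := hσ.one_l hG
  obtain ⟨one_r, r_r, op_l, l_one, l_l, r_op⟩ := hσ
  constructor
  case assoc =>
    intro p q s
    simp only [bicrossedOp, hG.assoc, hH.assoc, op_l, r_op, l_l, r_r]
  case one_op =>
    intro p
    simp only [bicrossedOp, one_r, one_l, hG.one_op, hH.one_op]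
  case op_one =>
    intro p
    simp only [bicrossedOp, r_one, l_one, hG.op_one, hH.op_one]
  case inv_op =>
    intro p
    simp only [bicrossedOp, bicrossedInv, ← r_op, l_l, hH.inv_op, r_one, l_one, hG.inv_op]
  case op_inv =>
    intro p
    simp only [bicrossedOp, bicrossedInv, r_r, ← op_l, hG.op_inv, one_r, one_l, hH.op_inv]

end IsMatchedPairOfGroups

namespace IsSemiTrivialAction

variable {G H : Type*} {mulG : G → G → G} {eG : G} {invG : G → G}
  {circG : G → G → G} {ceG : G} {cinvG : G → G}
  {mulH : H → H → H} {eH : H} {invH : H → H}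
  {circH : H → H → H} {ceH : H} {cinvH : H → H} {Φ : G → H → H}

theorem one_apply (hΦ : IsSemiTrivialAction circG mulH circH Φ)
    (hG : IsGroup circG ceG cinvG) (h : H) : Φ ceG h = h := by
  obtain ⟨aut, act_circ⟩ := hΦ
  apply (aut ceG).1.injective
  rw [← act_circ, hG.one_op]

theorem isMatchedPairOfGroups (hΦ : IsSemiTrivialAction circG mulH circH Φ)
    (hG : IsGroup circG ceG cinvG) (ceH : H) :
    IsMatchedPairOfGroups circG ceG circH ceH Φ (fun a _ => a) :=
  .of_action (hΦ.one_apply hG) hΦ.2 (fun a => (hΦ.1 a).2.2)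

theorem isBrace_bicrossedOp (hΦ : IsSemiTrivialAction circG mulH circH Φ)
    (hG : IsBrace mulG eG invG circG ceG cinvG) (hH : IsBrace mulH eH invH circH ceH cinvH) :
    IsBrace (bicrossedOp mulG mulH (fun _ h => h) (fun a _ => a)) (eH, eG)
      (bicrossedInv invG invH (fun _ h => h) (fun a _ => a))
      (bicrossedOp circG circH Φ (fun a _ => a)) (ceH, ceG)
      (bicrossedInv cinvG cinvH Φ (fun a _ => a)) where
  mul_group :=
    (IsMatchedPairOfGroups.of_trivial_actions mulG eG mulH eH).isGroup_bicrossedOp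
      hG.mul_group hH.mul_group
  mul_comm p q := Prod.ext (hH.mul_comm p.1 q.1) (hG.mul_comm p.2 q.2)
  circ_group :=
    (hΦ.isMatchedPairOfGroups hG.circ_group ceH).isGroup_bicrossedOp hG.circ_group hH.circ_group
  compat p q s := by
    have map_mul (a : G) (h k : H) : Φ a (mulH h k) = mulH (Φ a h) (Φ a k) := (hΦ.1 a).2.1 h k
    simp only [bicrossedOp, bicrossedInv, map_mul, hG.compat, hH.compat]

end IsSemiTrivialAction

theorem statement13_general {G H : Type*}
    {mulG : G → G → G} {eG : G} {invG : G → G}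
    {circG : G → G → G} {ceG : G} {cinvG : G → G}
    {mulH : H → H → H} {eH : H} {invH : H → H}
    {circH : H → H → H} {ceH : H} {cinvH : H → H} {Φ : G → H → H}
    (hG : IsBrace mulG eG invG circG ceG cinvG)
    (hH : IsBrace mulH eH invH circH ceH cinvH)
    (hΦ : IsSemiTrivialAction circG mulH circH Φ) :
    IsMatchedPairOfGroups mulG eG mulH eH (fun _ h => h) (fun a _ => a) ∧
    IsMatchedPairOfGroups circG ceG circH ceH Φ (fun a _ => a) ∧
    IsBrace (bicrossedOp mulG mulH (fun _ h => h) (fun a _ => a)) (eH, eG)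
      (bicrossedInv invG invH (fun _ h => h) (fun a _ => a))
      (bicrossedOp circG circH Φ (fun a _ => a)) (eH, eG)
      (bicrossedInv cinvG cinvH Φ (fun a _ => a)) := by
  refine ⟨.of_trivial_actions mulG eG mulH eH, hΦ.isMatchedPairOfGroups hG.circ_group ceH, ?_⟩
  have hP := hΦ.isBrace_bicrossedOp hG hH
  rwa [hG.circ_one_eq_one, hH.circ_one_eq_one] at hP

/-- An enhanced relative Rota-Baxter operator gives rise to a matched
pair of braces: `(G, H, σ)` with `a ⇀ h = h`, `a ↽ h = a` is a matched pair of the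
`·`-groups, `(G, H, θ)` with `a ⇁ h = Φ(a)(h)`, `a ↼ h = a` is a matched pair of the
`∘`-groups, and the double operations make `H × G` a brace with unit `(e_H, e_G)`. -/
theorem statement13 {G H : Type*}
    (mulG : G → G → G) (eG : G) (invG : G → G)
    (circG : G → G → G) (ceG : G) (cinvG : G → G)
    (mulH : H → H → H) (eH : H) (invH : H → H)
    (circH : H → H → H) (ceH : H) (cinvH : H → H)
    (hG : IsBrace mulG eG invG circG ceG cinvG)
    (hH : IsBrace mulH eH invH circH ceH cinvH)
    (Φ : G → H → H) (hΦ : IsSemiTrivialAction circG mulH circH Φ)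
    (B : H → G) (hB : IsEnhancedRelRBO mulG circG mulH circH Φ B) :
    IsMatchedPairOfGroups mulG eG mulH eH (fun _ h => h) (fun a _ => a) ∧
    IsMatchedPairOfGroups circG ceG circH ceH (fun a h => Φ a h) (fun a _ => a) ∧
    ∃ invP cinvP : H × G → H × G,
      IsBrace (fun p q => (mulH p.1 q.1, mulG p.2 q.2)) (eH, eG) invP
        (fun p q => (circH p.1 (Φ p.2 q.1), circG p.2 q.2)) (eH, eG) cinvP := by
  obtain ⟨hσ, hθ, hP⟩ := statement13_general hG hH hΦ
  exact ⟨hσ, hθ, _, _, hP⟩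
end
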